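/- Let k ≥ 1 and n ≥ 3k + 3. There is an (n−2k+2)-coloring of the (n,k)-Kneser graph which has at least k − 1 color classes that are nonempty and not star-shaped, and hence at most n − 3k + 3 star-shaped nonempty color classes. -/

import Mathlib

/-!
Two sets that each contain more than half of the same finite block must intersect. So if the ground
set is partitioned into blocks `B l` and every `k`-set has a majority in some block, choosing such a
block for each `k`-set is a proper coloring of the Kneser graph. Pigeonhole provides a majority
block as soon as `k > ∑ l, ⌊#(B l) / 2⌋`. When `k = ∑ l, ⌊#(B l) / 2⌋ + 1` the slack is just enough
to choose, for a block with at least three points and any point `i`, a `k`-set avoiding `i` whose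
only majority is in that block, so that no star contains the corresponding color class.
Cutting `[n]` into `k - 1` triples and `n - 3 (k - 1)` singletons gives the theorem.
-/

section

open Finset

variable {α ι : Type*}

/-- A proper coloring, with colors in `I`, of the Kneser graph of `k`-element subsets of `V`.
The coloring is a total function on finite sets, constrained only at vertices of the graph. -/
structure IsKneserColoring (V : Finset α) (k : ℕ) (I : Finset ι) (c : Finset α → ι) : Prop where
  mem {S : Finset α} : S ⊆ V → #S = k → c S ∈ I
  ne {S T : Finset α} : S ⊆ V → T ⊆ V → #S = k → #T = k → Disjoint S T → c S ≠ c T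

/-- The color class of `l` among the `k`-element subsets of `V`. -/
def kneserColorClass (V : Finset α) (k : ℕ) (c : Finset α → ι) (l : ι) : Set (Finset α) :=
  {S | S ⊆ V ∧ #S = k ∧ c S = l}

/-- A family of sets is star-shaped if its members share a point. -/
def IsStarShaped (F : Set (Finset α)) : Prop :=
  ∃ i, ∀ S ∈ F, i ∈ S

theorem card_filter_and_add_card_filter_and_not_le (I : Finset ι) (p q : ι → Prop)
    [DecidablePred p] [DecidablePred q] :
    #{l ∈ I | p l ∧ q l} + #{l ∈ I | p l ∧ ¬ q l} ≤ #I := by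
  rw [← filter_filter, ← filter_filter, card_filter_add_card_filter_not]
  exact card_filter_le I p

theorem exists_subset_biUnion_card_inter_eq [DecidableEq α] {I : Finset ι} {B : ι → Finset α}
    {a : ι → ℕ} (hB : (I : Set ι).PairwiseDisjoint B) (ha : ∀ j ∈ I, a j ≤ #(B j)) :
    ∃ S ⊆ I.biUnion B, #S = ∑ j ∈ I, a j ∧ ∀ j ∈ I, #(S ∩ B j) = a j := by
  choose! T hTB hTcard using fun j hj => exists_subset_card_eq (ha j hj)
  have hT : (I : Set ι).PairwiseDisjoint T := fun j hj j' hj' hne =>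
    (hB hj hj' hne).mono (hTB j hj) (hTB j' hj')
  refine ⟨I.biUnion T, biUnion_mono hTB, ?_, fun j hj => ?_⟩
  · rw [card_biUnion hT, sum_congr rfl hTcard]
  · have hinter : I.biUnion T ∩ B j = T j := by
      refine Subset.antisymm (fun x hx => ?_)
        (subset_inter (subset_biUnion_of_mem T hj) (hTB j hj))
      obtain ⟨hxT, hxB⟩ := mem_inter.1 hx
      obtain ⟨j', hj', hxj'⟩ := mem_biUnion.1 hxT
      rwa [hB.elim_finset hj hj' x hxB (hTB j' hj' hxj')]
    rw [hinter, hTcard j hj]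

variable [DecidableEq α]

/-- `S` contains more than half of the points of the block `B`. A `k`-set may only receive the
color of a block in which it has a majority. -/
def HasMajority (S B : Finset α) : Prop :=
  #B < 2 * #(S ∩ B)

theorem HasMajority.not_disjoint {S T B : Finset α}
    (hS : HasMajority S B) (hT : HasMajority T B) : ¬ Disjoint S T := by
  unfold HasMajority at hS hT
  have hmeet : ((S ∩ B) ∩ (T ∩ B)).Nonempty :=
    inter_nonempty_of_card_lt_card_add_card inter_subset_right inter_subset_right (by omega)
  rw [not_disjoint_iff_nonempty_inter]
  exact hmeet.mono (inter_subset_inter inter_subset_left inter_subset_left)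

variable {I : Finset ι} {B : ι → Finset α}

theorem exists_hasMajority {S : Finset α} (hS : S ⊆ I.biUnion B)
    (hcard : ∑ l ∈ I, #(B l) / 2 < #S) : ∃ l ∈ I, HasMajority S (B l) := by
  unfold HasMajority
  by_contra! hminority
  refine hcard.not_ge ?_
  calc #S = #(I.biUnion fun l => S ∩ B l) := by rw [← inter_biUnion, inter_eq_left.2 hS]
    _ ≤ ∑ l ∈ I, #(S ∩ B l) := card_biUnion_le
    _ ≤ ∑ l ∈ I, #(B l) / 2 := sum_le_sum fun l hl => by specialize hminority l hl; omega

theorem exists_notMem_forall_hasMajority_imp_eq (hB : (I : Set ι).PairwiseDisjoint B) {l : ι}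
    (hl : l ∈ I) (hcard : 3 ≤ #(B l)) (i : α) :
    ∃ S ⊆ I.biUnion B, #S = ∑ j ∈ I, #(B j) / 2 + 1 ∧ i ∉ S ∧
      ∀ j ∈ I, HasMajority S (B j) → j = l := by
  classical
  have hroom : ∀ j ∈ I, #(B j) / 2 + (if j = l then 1 else 0) ≤ #((B j).erase i) := by
    intro j _
    have herase : #(B j) - 1 ≤ #((B j).erase i) := pred_card_le_card_erase
    split_ifs with hjl
    · subst hjl; omega
    · omega
  obtain ⟨S, hSB, hScard, hSinter⟩ := exists_subset_biUnion_card_inter_eq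
    (hB.mono fun j => erase_subset i (B j)) hroom
  have hi : i ∉ S := fun hiS => by
    obtain ⟨j, -, hij⟩ := mem_biUnion.1 (hSB hiS)
    exact notMem_erase i (B j) hij
  refine ⟨S, hSB.trans (biUnion_mono fun j _ => erase_subset i (B j)), ?_, hi, ?_⟩
  · rw [hScard, sum_add_distrib, sum_ite_eq' I l, if_pos hl]
  · intro j hj hmaj
    have hinter := hSinter j hj
    rw [inter_erase, erase_eq_of_notMem fun h => hi (mem_inter.1 h).1] at hinter
    by_contra hjl
    rw [HasMajority, hinter, if_neg hjl] at hmaj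
    omega

/-- `c` gives each `k`-element subset of `⋃ l ∈ I, B l` the index of a block in which that subset
has a majority. The choice among several such blocks is left free. -/
def IsMajorityColoring (I : Finset ι) (B : ι → Finset α) (k : ℕ) (c : Finset α → ι) : Prop :=
  ∀ S ⊆ I.biUnion B, #S = k → c S ∈ I ∧ HasMajority S (B (c S))

theorem exists_isMajorityColoring [Nonempty ι] {k : ℕ} (hk : ∑ l ∈ I, #(B l) / 2 < k) :
    ∃ c, IsMajorityColoring I B k c := by
  choose! c hc using fun S (hS : S ⊆ I.biUnion B ∧ #S = k) =>
    exists_hasMajority hS.1 (hS.2 ▸ hk)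
  exact ⟨c, fun S hS hcard => hc S ⟨hS, hcard⟩⟩

namespace IsMajorityColoring

variable {k : ℕ} {c : Finset α → ι}

theorem isKneserColoring (hc : IsMajorityColoring I B k c) :
    IsKneserColoring (I.biUnion B) k I c where
  mem hS hScard := (hc _ hS hScard).1
  ne {S T} hS hT hScard hTcard hdisj heq := by
    have hmajS := (hc S hS hScard).2
    rw [heq] at hmajS
    exact hmajS.not_disjoint (hc T hT hTcard).2 hdisj

theorem exists_mem_kneserColorClass_notMem (hc : IsMajorityColoring I B k c)
    (hB : (I : Set ι).PairwiseDisjoint B) (hk : ∑ j ∈ I, #(B j) / 2 + 1 = k) {l : ι}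
    (hl : l ∈ I) (hcard : 3 ≤ #(B l)) (i : α) :
    ∃ S ∈ kneserColorClass (I.biUnion B) k c l, i ∉ S := by
  obtain ⟨S, hS, hScard, hi, honly⟩ := exists_notMem_forall_hasMajority_imp_eq hB hl hcard i
  rw [hk] at hScard
  obtain ⟨hcI, hmaj⟩ := hc S hS hScard
  exact ⟨S, ⟨hS, hScard, honly _ hcI hmaj⟩, hi⟩

theorem nonempty_and_not_isStarShaped_kneserColorClass (hc : IsMajorityColoring I B k c)
    (hB : (I : Set ι).PairwiseDisjoint B) (hk : ∑ j ∈ I, #(B j) / 2 + 1 = k) {l : ι}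
    (hl : l ∈ I) (hcard : 3 ≤ #(B l)) :
    (kneserColorClass (I.biUnion B) k c l).Nonempty ∧
      ¬ IsStarShaped (kneserColorClass (I.biUnion B) k c l) := by
  have havoid := hc.exists_mem_kneserColorClass_notMem hB hk hl hcard
  refine ⟨?_, fun ⟨i, hi⟩ => ?_⟩
  · obtain ⟨x, -⟩ : (B l).Nonempty := card_pos.1 (by omega)
    obtain ⟨S, hS, -⟩ := havoid x
    exact ⟨S, hS⟩
  · obtain ⟨S, hS, hiS⟩ := havoid i
    exact hiS (hi S hS)

end IsMajorityColoring

/-- The blocks of the partition of `{1, …, n}` into the triples `{3l-2, 3l-1, 3l}` for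
`1 ≤ l ≤ m`, followed by singletons. Blocks are numbered from `1`, as the colors are; the block with
index `0` is not part of the partition. -/
def tripleBlock (m l : ℕ) : Finset ℕ :=
  if l ≤ m then Icc (3 * l - 2) (3 * l) else {l + 2 * m}

theorem mem_tripleBlock {m l x : ℕ} :
    x ∈ tripleBlock m l ↔ l ≤ m ∧ 3 * l ≤ x + 2 ∧ x ≤ 3 * l ∨ m < l ∧ x = l + 2 * m := by
  unfold tripleBlock
  split_ifs with hlm
  · rw [mem_Icc]; omega
  · rw [mem_singleton]; omega

theorem card_tripleBlock_of_le {m l : ℕ} (hl : 1 ≤ l) (hlm : l ≤ m) : #(tripleBlock m l) = 3 := by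
  rw [tripleBlock, if_pos hlm, Nat.card_Icc]
  omega

theorem card_tripleBlock_of_lt {m l : ℕ} (hml : m < l) : #(tripleBlock m l) = 1 := by
  rw [tripleBlock, if_neg hml.not_ge, card_singleton]

theorem pairwiseDisjoint_tripleBlock (m : ℕ) (s : Set ℕ) : s.PairwiseDisjoint (tripleBlock m) := by
  intro l _ l' _ hne
  refine disjoint_left.2 fun x hx hx' => hne ?_
  rw [mem_tripleBlock] at hx hx'
  omega

theorem biUnion_tripleBlock {m n : ℕ} (h : 3 * m ≤ n) :
    (Icc 1 (n - 2 * m)).biUnion (tripleBlock m) = Icc 1 n := by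
  ext x
  simp only [mem_biUnion, mem_Icc, mem_tripleBlock]
  refine ⟨fun ⟨l, hl, hx⟩ => by omega, fun hx => ?_⟩
  rcases le_or_gt x (3 * m) with hxm | hxm
  · exact ⟨(x + 2) / 3, by omega, by omega⟩
  · exact ⟨x - 2 * m, by omega, by omega⟩

theorem sum_card_tripleBlock_div_two {m N : ℕ} (h : m ≤ N) :
    ∑ l ∈ Icc 1 N, #(tripleBlock m l) / 2 = m := by
  have htriples : ∀ l ∈ Icc 1 m, #(tripleBlock m l) / 2 = 1 := fun l hl => by
    rw [card_tripleBlock_of_le (mem_Icc.1 hl).1 (mem_Icc.1 hl).2]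
  have hsingletons : ∀ l ∈ Icc 1 N, l ∉ Icc 1 m → #(tripleBlock m l) / 2 = 0 :=
    fun l hl hlm => by
      rw [mem_Icc] at hl hlm
      rw [card_tripleBlock_of_lt (by omega)]
  rw [← sum_subset (Icc_subset_Icc_right h) hsingletons, sum_congr rfl htriples, sum_const,
    Nat.card_Icc, smul_eq_mul, mul_one, Nat.add_sub_cancel]

open Classical in
theorem coloring_with_few_starShaped_general {m n : ℕ} (h : 3 * m ≤ n) :
    ∃ c : Finset ℕ → ℕ,
      IsKneserColoring (Icc 1 n) (m + 1) (Icc 1 (n - 2 * m)) c ∧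
      m ≤ #{l ∈ Icc 1 (n - 2 * m) | (kneserColorClass (Icc 1 n) (m + 1) c l).Nonempty ∧
        ¬ IsStarShaped (kneserColorClass (Icc 1 n) (m + 1) c l)} ∧
      #{l ∈ Icc 1 (n - 2 * m) | (kneserColorClass (Icc 1 n) (m + 1) c l).Nonempty ∧
        IsStarShaped (kneserColorClass (Icc 1 n) (m + 1) c l)} ≤ n - 3 * m := by
  have hdisj := pairwiseDisjoint_tripleBlock m (Icc 1 (n - 2 * m) : Finset ℕ)
  have hsum := sum_card_tripleBlock_div_two (m := m) (N := n - 2 * m) (by omega)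
  obtain ⟨c, hc⟩ := exists_isMajorityColoring (hsum.trans_lt m.lt_succ_self)
  have hproper := hc.isKneserColoring
  have hclass := fun l => hc.nonempty_and_not_isStarShaped_kneserColorClass hdisj
    (congrArg (· + 1) hsum) (l := l)
  rw [biUnion_tripleBlock h] at hproper hclass
  have hnonstar : m ≤ #{l ∈ Icc 1 (n - 2 * m) |
      (kneserColorClass (Icc 1 n) (m + 1) c l).Nonempty ∧
        ¬ IsStarShaped (kneserColorClass (Icc 1 n) (m + 1) c l)} := by
    calc m = #(Icc 1 m) := by rw [Nat.card_Icc, Nat.add_sub_cancel]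
      _ ≤ _ := card_le_card fun l hl => by
        have hlI : l ∈ Icc 1 (n - 2 * m) := Icc_subset_Icc_right (by omega) hl
        rw [mem_Icc] at hl
        exact mem_filter.2 ⟨hlI, hclass l hlI (card_tripleBlock_of_le hl.1 hl.2).ge⟩
  have htotal := card_filter_and_add_card_filter_and_not_le (Icc 1 (n - 2 * m))
    (fun l => (kneserColorClass (Icc 1 n) (m + 1) c l).Nonempty)
    (fun l => IsStarShaped (kneserColorClass (Icc 1 n) (m + 1) c l))
  rw [Nat.card_Icc] at htotal
  exact ⟨c, hproper, hnonstar, by omega⟩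

end

open Classical in
/-- For `k ≥ 1` and `n ≥ 3k+3`, there is an `(n-2k+2)`-coloring of the `(n,k)`-Kneser
graph having at least `k-1` color classes that are nonempty and not star-shaped, and
hence at most `n-3k+3` nonempty star-shaped color classes. -/
theorem coloring_with_few_starShaped (n k : ℕ) (hk : 1 ≤ k) (hn : 3 * k + 3 ≤ n) :
    ∃ c : Finset ℕ → ℕ,
      (∀ S : Finset ℕ, S ⊆ Finset.Icc 1 n → S.card = k →
        c S ∈ Finset.Icc 1 (n - 2 * k + 2)) ∧
      (∀ S T : Finset ℕ, S ⊆ Finset.Icc 1 n → T ⊆ Finset.Icc 1 n →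
        S.card = k → T.card = k → Disjoint S T → c S ≠ c T) ∧
      k - 1 ≤ ((Finset.Icc 1 (n - 2 * k + 2)).filter (fun ℓ =>
        (∃ S : Finset ℕ, S ⊆ Finset.Icc 1 n ∧ S.card = k ∧ c S = ℓ) ∧
        ¬ ∃ i : ℕ, ∀ S : Finset ℕ, S ⊆ Finset.Icc 1 n → S.card = k →
          c S = ℓ → i ∈ S)).card ∧
      ((Finset.Icc 1 (n - 2 * k + 2)).filter (fun ℓ =>
        (∃ S : Finset ℕ, S ⊆ Finset.Icc 1 n ∧ S.card = k ∧ c S = ℓ) ∧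
        ∃ i : ℕ, ∀ S : Finset ℕ, S ⊆ Finset.Icc 1 n → S.card = k →
          c S = ℓ → i ∈ S)).card ≤ n - 3 * k + 3 := by
  obtain ⟨m, rfl⟩ := Nat.exists_eq_add_of_le' hk
  obtain ⟨c, hc, hnonstar, hstar⟩ :=
    coloring_with_few_starShaped_general (m := m) (n := n) (by omega)
  have hcolors : n - 2 * (m + 1) + 2 = n - 2 * m := by omega
  have hbound : n - 3 * (m + 1) + 3 = n - 3 * m := by omega
  rw [hcolors, hbound, Nat.add_sub_cancel]
  simp only [kneserColorClass, IsStarShaped, Set.Nonempty, Set.mem_ofPred_eq, and_imp]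
    at hnonstar hstar
  exact ⟨c, fun S => hc.mem, fun S T => hc.ne, by convert hnonstar, by convert hstar⟩
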